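/- Let η₁, η₂ : ℂ ∖ [0,+∞) → ℂ ∖ [0,+∞) be analytic functions satisfying: (a) lim_{x↑0, x<0} η_j(x) = 0; (b) π > arg η_j(z) > arg z for all z ∈ ℂ⁺; (c) η_j(conj(z)) = conj(η_j(z)) (j = 1,2). Then there exists a unique analytic function ω : ℂ ∖ [0,+∞) → ℂ ∖ [0,+∞) such that ω(z) = ω(z) · η₂( z · η₁(ω(z)) / ω(z) ) / η₁(ω(z)) for all z ∈ ℂ ∖ [0,+∞), and this ω satisfies arg z < arg ω(z) < π for all z ∈ ℂ⁺. -/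

import Mathlib

open Complex Filter Set Topology

/-- The slit plane `ℂ ∖ [0,+∞)`. -/
def SlitP : Set ℂ := {z : ℂ | z.re < 0 ∨ z.im ≠ 0}

/-! ### The slit plane -/

lemma mem_SlitP_iff (z : ℂ) : z ∈ SlitP ↔ -z ∈ slitPlane := by
  simp [SlitP, Complex.mem_slitPlane_iff]

lemma SlitP_eq : SlitP = (fun z : ℂ => -z) ⁻¹' slitPlane := by
  ext z; exact mem_SlitP_iff z

lemma SlitP_isOpen : IsOpen SlitP := by
  rw [SlitP_eq]; exact isOpen_slitPlane.preimage continuous_neg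

lemma SlitP_preconn : IsPreconnected SlitP := by
  have h : IsPreconnected slitPlane :=
    (starConvex_one_slitPlane.isPathConnected one_mem_slitPlane).isConnected.isPreconnected
  have h2 := h.image (fun z : ℂ => -z) continuous_neg.continuousOn
  convert h2 using 1
  ext z
  rw [mem_SlitP_iff]
  constructor
  · intro hz; exact ⟨-z, hz, by simp⟩
  · rintro ⟨w, hw, rfl⟩; simpa using hw

lemma SlitP_ne_zero {z : ℂ} (hz : z ∈ SlitP) : z ≠ 0 := by
  rintro rfl
  simp [SlitP] at hz

lemma ofReal_mem_SlitP {x : ℝ} (hx : x < 0) : (x : ℂ) ∈ SlitP := by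
  left; simpa using hx

lemma conj_mem_SlitP {z : ℂ} (hz : z ∈ SlitP) : (starRingEnd ℂ) z ∈ SlitP := by
  rcases hz with h | h
  · left; simpa using h
  · right; simpa using h

/-- Identity theorem on the slit plane, from equality on the negative half-line. -/
lemma eqOn_SlitP {f g : ℂ → ℂ} (hf : DifferentiableOn ℂ f SlitP) (hg : DifferentiableOn ℂ g SlitP)
    {a b : ℝ} (hab : a < b) (hb : b ≤ 0)
    (h : ∀ x : ℝ, a < x → x < b → f x = g x) : EqOn f g SlitP := by
  have hm : ((a + b) / 2 : ℝ) < 0 := by linarith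
  refine (hf.analyticOnNhd SlitP_isOpen).eqOn_of_preconnected_of_frequently_eq
    (hg.analyticOnNhd SlitP_isOpen) SlitP_preconn (ofReal_mem_SlitP hm) ?_
  have ht : Tendsto (fun x : ℝ => (x : ℂ)) (𝓝[≠] ((a + b) / 2 : ℝ)) (𝓝[≠] (((a + b) / 2 : ℝ) : ℂ)) := by
    refine tendsto_nhdsWithin_of_tendsto_nhds_of_eventually_within _
      (Complex.continuous_ofReal.continuousAt.tendsto.mono_left nhdsWithin_le_nhds) ?_
    filter_upwards [self_mem_nhdsWithin] with x hx
    intro h2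
    exact hx (Complex.ofReal_injective h2)
  refine ht.frequently (Eventually.frequently ?_)
  have : ∀ᶠ x : ℝ in 𝓝 ((a + b) / 2), x ∈ Ioo a b :=
    Ioo_mem_nhds (by linarith) (by linarith)
  filter_upwards [this.filter_mono nhdsWithin_le_nhds] with x hx
  exact h x hx.1 hx.2

/-! ### Arguments -/

lemma im_mul_conj_polar (v z : ℂ) :
    v.im * z.re - v.re * z.im = ‖v‖ * ‖z‖ * Real.sin (v.arg - z.arg) := by
  rw [Real.sin_sub]
  have h1 := Complex.norm_mul_cos_arg v
  have h2 := Complex.norm_mul_sin_arg v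
  have h3 := Complex.norm_mul_cos_arg z
  have h4 := Complex.norm_mul_sin_arg z
  rw [← h1, ← h2, ← h3, ← h4]
  simp only [h1, h2, h3, h4]
  linear_combination (-‖z‖ * Real.cos z.arg) * h2 - v.im * h3 + ‖z‖ * Real.sin z.arg * h1 + v.re * h4

lemma arg_bounds {z : ℂ} (hz : 0 < z.im) : 0 < z.arg ∧ z.arg < Real.pi := by
  constructor
  · refine lt_of_le_of_ne (Complex.arg_nonneg_iff.2 hz.le) ?_
    intro h
    have := (Complex.arg_eq_zero_iff.1 h.symm).2
    linarith
  · refine lt_of_le_of_ne (Complex.arg_le_pi z) ?_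
    intro h
    have := (Complex.arg_eq_pi_iff.1 h).2
    linarith

lemma arg_lt_iff {z v : ℂ} (hz : 0 < z.im) :
    (z.arg < v.arg ∧ v.arg < Real.pi) ↔ (0 < v.im ∧ 0 < v.im * z.re - v.re * z.im) := by
  have hz0 : 0 < ‖z‖ := norm_pos_iff.2 (by rintro rfl; simp at hz)
  have ⟨a1, a2⟩ := arg_bounds hz
  constructor
  · rintro ⟨h1, h2⟩
    have hv0 : 0 < ‖v‖ := norm_pos_iff.2 (by rintro rfl; simp at h1; linarith)
    refine ⟨?_, ?_⟩
    · rw [← Complex.norm_mul_sin_arg v]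
      exact mul_pos hv0 (Real.sin_pos_of_pos_of_lt_pi (by linarith) h2)
    · rw [im_mul_conj_polar]
      exact mul_pos (mul_pos hv0 hz0) (Real.sin_pos_of_pos_of_lt_pi (by linarith) (by linarith))
  · rintro ⟨h1, h2⟩
    have ⟨b1, b2⟩ := arg_bounds h1
    refine ⟨?_, b2⟩
    by_contra hc
    push Not at hc
    rw [im_mul_conj_polar] at h2
    have : Real.sin (v.arg - z.arg) ≤ 0 :=
      Real.sin_nonpos_of_nonpos_of_neg_pi_le (by linarith) (by linarith)
    have := mul_nonpos_of_nonneg_of_nonpos (mul_nonneg (norm_nonneg v) hz0.le) this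
    linarith

/-! ### The class of functions -/

structure Good (η : ℂ → ℂ) : Prop where
  hd : DifferentiableOn ℂ η SlitP
  hm : MapsTo η SlitP SlitP
  hlim : Tendsto (fun x : ℝ => η (Complex.ofReal x)) (𝓝[<] (0:ℝ)) (𝓝 0)
  him : ∀ z : ℂ, 0 < z.im → 0 < (η z).im
  hh : ∀ z : ℂ, 0 < z.im → 0 < (η z / z).im
  hconj : ∀ z ∈ SlitP, η ((starRingEnd ℂ) z) = (starRingEnd ℂ) (η z)

lemma div_im_eq (v z : ℂ) : (v / z).im = (v.im * z.re - v.re * z.im) / normSq z := by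
  rw [Complex.div_im]; ring

lemma Good.mk' {η : ℂ → ℂ} (hd : DifferentiableOn ℂ η SlitP) (hm : MapsTo η SlitP SlitP)
    (hlim : Tendsto (fun x : ℝ => η (Complex.ofReal x)) (𝓝[<] (0:ℝ)) (𝓝 0))
    (harg : ∀ z : ℂ, 0 < z.im → z.arg < (η z).arg ∧ (η z).arg < Real.pi)
    (hconj : ∀ z ∈ SlitP, η ((starRingEnd ℂ) z) = (starRingEnd ℂ) (η z)) : Good η := by
  refine ⟨hd, hm, hlim, fun z hz => ((arg_lt_iff hz).1 (harg z hz)).1, fun z hz => ?_, hconj⟩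
  rw [div_im_eq]
  exact div_pos ((arg_lt_iff hz).1 (harg z hz)).2 (normSq_pos.2 (by rintro rfl; simp at hz))

/-- `T η z w = z * η w / w`. -/
noncomputable def TT (η : ℂ → ℂ) (z w : ℂ) : ℂ := z * (η w / w)

/-- invariant region -/
def SInv (z w : ℂ) : Prop := w ∈ SlitP ∧
  (0 < z.im → 0 ≤ w.im ∧ 0 ≤ w.im * z.re - w.re * z.im) ∧
  (z.im < 0 → w.im ≤ 0 ∧ w.im * z.re - w.re * z.im ≤ 0) ∧
  (z.im = 0 → w.im = 0)

lemma SInv.self {z : ℂ} (hz : z ∈ SlitP) : SInv z z := by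
  refine ⟨hz, fun h => ⟨h.le, by linarith⟩, fun h => ⟨h.le, by linarith⟩, id⟩

lemma SInv.conj {z w : ℂ} (h : SInv z w) : SInv ((starRingEnd ℂ) z) ((starRingEnd ℂ) w) := by
  obtain ⟨h1, h2, h3, h4⟩ := h
  refine ⟨conj_mem_SlitP h1, ?_, ?_, ?_⟩
  · intro h
    simp only [conj_im, conj_re] at h ⊢
    have := h3 (by linarith)
    constructor <;> linarith
  · intro h
    simp only [conj_im, conj_re] at h ⊢
    have := h2 (by linarith)
    constructor <;> linarith
  · intro h
    simp only [conj_im] at h ⊢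
    have := h4 (by linarith)
    linarith

namespace Good
variable {η : ℂ → ℂ}

lemma real (hη : Good η) {x : ℝ} (hx : x < 0) : (η x).im = 0 ∧ (η x).re < 0 := by
  have h1 : (η x).im = 0 := by
    have := hη.hconj x (ofReal_mem_SlitP hx)
    rw [conj_ofReal] at this
    exact Complex.conj_eq_iff_im.1 this.symm
  refine ⟨h1, ?_⟩
  rcases hη.hm (ofReal_mem_SlitP hx) with h | h
  · exact h
  · exact absurd h1 h

lemma h_real (hη : Good η) {x : ℝ} (hx : x < 0) :
    η x / x = (((η x).re / x : ℝ) : ℂ) ∧ 0 < (η x).re / x := by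
  have ⟨h1, h2⟩ := hη.real hx
  refine ⟨?_, div_pos_of_neg_of_neg h2 hx⟩
  push_cast
  congr 1
  apply Complex.ext <;> simp [h1]

lemma TT_conj (hη : Good η) {z w : ℂ} (hw : w ∈ SlitP) :
    TT η ((starRingEnd ℂ) z) ((starRingEnd ℂ) w) = (starRingEnd ℂ) (TT η z w) := by
  simp [TT, hη.hconj w hw]

lemma im_ne (hη : Good η) {w : ℂ} (h : w.im < 0) : (η w).im < 0 := by
  have h1 := hη.him ((starRingEnd ℂ) w) (by simpa using h)
  rw [hη.hconj w (Or.inr h.ne)] at h1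
  simpa using h1

/-- strict statements in the upper half-plane -/
lemma TT_upper (hη : Good η) {z w : ℂ} (hz : 0 < z.im) (h : SInv z w) :
    0 < (TT η z w).im ∧ 0 ≤ (TT η z w).im * z.re - (TT η z w).re * z.im ∧
    (0 < w.im → 0 < (TT η z w).im * z.re - (TT η z w).re * z.im) := by
  obtain ⟨h1, h2, -, -⟩ := h
  obtain ⟨h2, h3⟩ := h2 hz
  have hN : 0 < z.re * z.re + z.im * z.im := by nlinarith [mul_self_nonneg z.re, mul_pos hz hz]
  rcases h2.lt_or_eq with hw | hw
  · have e1 := hη.hh w hw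
    have e2 : 0 < (w * (η w / w)).im := by
      rw [mul_div_cancel₀ _ (SlitP_ne_zero h1)]; exact hη.him w hw
    unfold TT
    generalize η w / w = k at *
    rw [mul_im] at e2
    have key : 0 < (z * k).im * z.re - (z * k).re * z.im := by
      rw [mul_im, mul_re]
      have : (z.re * k.im + z.im * k.re) * z.re - (z.re * k.re - z.im * k.im) * z.im =
        (z.re * z.re + z.im * z.im) * k.im := by ring
      rw [this]; exact mul_pos hN e1
    refine ⟨?_, key.le, fun _ => key⟩
    rw [mul_im]
    have : w.im * (z.re * k.im + z.im * k.re) = z.im * (w.re * k.im + w.im * k.re) +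
      (w.im * z.re - w.re * z.im) * k.im := by ring
    have h5 : 0 < w.im * (z.re * k.im + z.im * k.re) := by
      rw [this]; exact add_pos_of_pos_of_nonneg (mul_pos hz e2) (mul_nonneg h3 e1.le)
    exact (mul_pos_iff_of_pos_left hw).1 h5
  · have hwr : w.re < 0 := by
      rcases h1 with h | h
      · exact h
      · exact absurd hw.symm h
    have hwe : w = (w.re : ℂ) := by apply Complex.ext <;> simp [← hw]
    have ⟨e1, e2⟩ := hη.h_real hwr
    rw [← hwe] at e1 e2
    unfold TT
    rw [e1]
    generalize (η w).re / w.re = k at *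
    refine ⟨?_, ?_, fun h => absurd hw h.ne⟩
    · simpa using mul_pos hz e2
    · simp; nlinarith

lemma TT_inv (hη : Good η) {z w : ℂ} (hz : z ∈ SlitP) (h : SInv z w) : SInv z (TT η z w) := by
  have up : ∀ z w : ℂ, 0 < z.im → SInv z w → SInv z (TT η z w) := by
    intro z w hz h
    have ⟨a, b, c⟩ := hη.TT_upper hz h
    exact ⟨Or.inr a.ne', fun _ => ⟨a.le, b⟩, fun h => absurd hz (not_lt.2 h.le),
      fun h => absurd h hz.ne'⟩
  rcases lt_trichotomy z.im 0 with hz1 | hz1 | hz1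
  · have h2 := (up _ _ (by simpa using hz1) h.conj).conj
    rw [hη.TT_conj h.1] at h2
    simpa using h2
  · have hzr : z.re < 0 := by
      rcases hz with h | h
      · exact h
      · exact absurd hz1 h
    have hwi := h.2.2.2 hz1
    have hwr : w.re < 0 := by
      rcases h.1 with h | h
      · exact h
      · exact absurd hwi h
    have hwe : w = (w.re : ℂ) := by apply Complex.ext <;> simp [hwi]
    have ⟨e1, e2⟩ := hη.h_real hwr
    rw [← hwe] at e1 e2
    have e3 : TT η z w = z * (((η w).re / w.re : ℝ) : ℂ) := by rw [TT, e1]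
    rw [e3]
    generalize (η w).re / w.re = k at *
    refine ⟨Or.inl ?_, fun h => absurd hz1 h.ne', fun h => absurd hz1 h.ne, fun _ => ?_⟩
    · simpa [hz1] using mul_neg_of_neg_of_pos hzr e2
    · simp [hz1]
  · exact up _ _ hz1 h

end Good

/-- Monotonicity on the negative half-line. -/
lemma mono_of_pick {F : ℂ → ℂ} (hF : DifferentiableOn ℂ F SlitP)
    (hr : ∀ x : ℝ, x < 0 → (F x).im = 0) (hp : ∀ z : ℂ, 0 < z.im → 0 < (F z).im) :
    MonotoneOn (fun x : ℝ => (F x).re) (Iio 0) := by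
  have hder : ∀ x : ℝ, x < 0 → HasDerivAt (fun x : ℝ => (F x).re) (deriv F x).re x := by
    intro x hx
    have h1 : HasDerivAt F (deriv F x) (x : ℂ) :=
      (hF.differentiableAt (SlitP_isOpen.mem_nhds (ofReal_mem_SlitP hx))).hasDerivAt
    exact h1.real_of_complex
  have hpos : ∀ x : ℝ, x < 0 → 0 ≤ (deriv F x).re := by
    intro x hx
    have h1 : HasDerivAt F (deriv F x) (x : ℂ) :=
      (hF.differentiableAt (SlitP_isOpen.mem_nhds (ofReal_mem_SlitP hx))).hasDerivAt
    have h2 : HasDerivAt (fun y : ℂ => -I * F (x + y * I)) (deriv F x) ((0 : ℝ) : ℂ) := by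
      have h3 : HasDerivAt (fun y : ℂ => (x : ℂ) + y * I) I ((0 : ℝ) : ℂ) := by
        simpa using ((hasDerivAt_id ((0 : ℝ) : ℂ)).mul_const I).const_add (x : ℂ)
      have h4 : HasDerivAt (fun y : ℂ => F (x + y * I)) (deriv F x * I) ((0 : ℝ) : ℂ) := by
        refine HasDerivAt.comp ((0 : ℝ) : ℂ) (h₂ := F) (h := fun y : ℂ => (x : ℂ) + y * I) ?_ h3
        simpa using h1
      have h5 := h4.const_mul (-I)
      have e : -I * (deriv F x * I) = deriv F x := by
        linear_combination (-deriv F x) * I_mul_I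
      rwa [e] at h5
    have h6 := h2.real_of_complex
    have h7 : Tendsto (fun t : ℝ => t⁻¹ * (F (x + t * I)).im) (𝓝[>] 0) (𝓝 (deriv F x).re) := by
      have := h6.tendsto_slope_zero_right
      refine this.congr' ?_
      filter_upwards with t
      simp [hr x hx]
    refine ge_of_tendsto h7 ?_
    filter_upwards [self_mem_nhdsWithin] with t ht
    have ht : 0 < t := ht
    have := hp (x + t * I) (by simpa using ht)
    positivity
  refine monotoneOn_of_deriv_nonneg (convex_Iio 0) ?_ ?_ ?_
  · intro x hx
    exact (hder x hx).continuousAt.continuousWithinAt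
  · intro x hx
    rw [interior_Iio] at hx
    exact (hder x hx).differentiableAt.differentiableWithinAt
  · intro x hx
    rw [interior_Iio] at hx
    rw [(hder x hx).deriv]
    exact hpos x hx

/-! ### Real-variable part -/

structure RGood (e : ℝ → ℝ) : Prop where
  neg : ∀ x < 0, e x < 0
  mono : StrictMonoOn e (Iio 0)
  kmono : MonotoneOn (fun x => e x / x) (Iio 0)
  cont : ContinuousOn e (Iio 0)
  lim : Tendsto e (𝓝[<] 0) (𝓝 0)

namespace RGood
variable {e e₁ e₂ : ℝ → ℝ}

lemma kpos (h : RGood e) {x : ℝ} (hx : x < 0) : 0 < e x / x := div_pos_of_neg_of_neg (h.neg x hx) hx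

lemma kcont (h : RGood e) : ContinuousOn (fun x => e x / x) (Iio 0) :=
  h.cont.div continuousOn_id fun _ hx => ne_of_lt hx

lemma arg_neg (h : RGood e) {x w : ℝ} (hx : x < 0) (hw : w < 0) : x * (e w / w) < 0 :=
  mul_neg_of_neg_of_pos hx (h.kpos hw)

lemma arg_anti (h : RGood e) {x v w : ℝ} (hx : x < 0) (hw : w < 0) (hvw : v ≤ w) :
    x * (e w / w) ≤ x * (e v / v) :=
  mul_le_mul_of_nonpos_left (h.kmono (lt_of_le_of_lt hvw hw) hw hvw) hx.le

lemma exists_sol (h₁ : RGood e₁) (h₂ : RGood e₂) {x : ℝ} (hx : x < 0) :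
    ∃ w < 0, e₂ (x * (e₁ w / w)) = e₁ w := by
  have m1 : (-1 : ℝ) < 0 := by norm_num
  -- a point near zero
  have A : ∃ b, -1 < b ∧ b < 0 ∧ e₂ (x * (e₁ b / b)) ≤ e₁ b := by
    have c := h₂.neg _ (h₁.arg_neg hx m1)
    have ev : ∀ᶠ b in 𝓝[<] (0:ℝ), e₂ (x * (e₁ (-1) / (-1))) < e₁ b := h₁.lim.eventually_const_lt c
    have ev2 : ∀ᶠ b in 𝓝[<] (0:ℝ), b ∈ Ioo (-1 : ℝ) 0 := Ioo_mem_nhdsLT m1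
    obtain ⟨b, hb1, hb2⟩ := (ev.and ev2).exists
    refine ⟨b, hb2.1, hb2.2, le_trans ?_ hb1.le⟩
    exact h₂.mono.monotoneOn (h₁.arg_neg hx hb2.2) (h₁.arg_neg hx m1) (h₁.arg_anti hx hb2.2 hb2.1.le)
  have B : ∃ a ≤ -1, e₁ a ≤ e₂ (x * (e₁ a / a)) := by
    have c := h₁.neg _ m1
    have ev : ∀ᶠ b in 𝓝[<] (0:ℝ), e₁ (-1) < e₂ b := h₂.lim.eventually_const_lt c
    obtain ⟨d, hd, hd2⟩ := (mem_nhdsLT_iff_exists_Ioo_subset).1 ev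
    have hd : d < 0 := hd
    by_cases hc : ∃ a ≤ -1, d < x * (e₁ a / a)
    · obtain ⟨a, ha, ha2⟩ := hc
      refine ⟨a, ha, ?_⟩
      have ha0 : a < 0 := by linarith
      have : e₁ (-1) < e₂ (x * (e₁ a / a)) := hd2 ⟨ha2, h₁.arg_neg hx ha0⟩
      exact le_trans (h₁.mono.monotoneOn ha0 m1 ha) this.le
    · push Not at hc
      set E := e₂ (x * (e₁ (-1) / (-1))) with hE
      have hE0 : E < 0 := h₂.neg _ (h₁.arg_neg hx m1)
      set a := min (-1) (E * x / d) with ha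
      have ha1 : a ≤ -1 := min_le_left _ _
      have ha2 : a ≤ E * x / d := min_le_right _ _
      have ha0 : a < 0 := by linarith
      refine ⟨a, ha1, ?_⟩
      have h3 : E ≤ e₂ (x * (e₁ a / a)) :=
        h₂.mono.monotoneOn (h₁.arg_neg hx m1) (h₁.arg_neg hx ha0) (h₁.arg_anti hx m1 ha1)
      refine le_trans ?_ h3
      have h4 := hc a ha1
      have hk : d / x ≤ e₁ a / a := by
        rw [div_le_iff_of_neg hx]; linarith
      have h5 : e₁ a = a * (e₁ a / a) := (mul_div_cancel₀ _ ha0.ne).symm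
      rw [h5]
      calc a * (e₁ a / a) ≤ a * (d / x) := mul_le_mul_of_nonpos_left hk ha0.le
        _ ≤ (E * x / d) * (d / x) :=
          mul_le_mul_of_nonneg_right ha2 (div_pos_of_neg_of_neg hd hx).le
        _ = E := by
          have := hd.ne
          have := hx.ne
          field_simp
  obtain ⟨b, hb1, hb0, hb⟩ := A
  obtain ⟨a, ha1, ha⟩ := B
  have hab : a ≤ b := by linarith
  have sub : Icc a b ⊆ Iio 0 := fun t ht => lt_of_le_of_lt ht.2 hb0
  have hcont : ContinuousOn (fun w => e₂ (x * (e₁ w / w)) - e₁ w) (Icc a b) := by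
    refine ContinuousOn.sub ?_ (h₁.cont.mono sub)
    refine h₂.cont.comp (continuousOn_const.mul (h₁.kcont.mono sub)) ?_
    intro w hw
    exact h₁.arg_neg hx (sub hw)
  have := intermediate_value_Icc' hab hcont (show (0:ℝ) ∈ _ from ⟨by linarith, by linarith⟩)
  obtain ⟨w, hw, hw2⟩ := this
  exact ⟨w, sub hw, by simpa [sub_eq_zero] using hw2⟩

lemma unique_sol (h₁ : RGood e₁) (h₂ : RGood e₂) {x : ℝ} (hx : x < 0) {v w : ℝ} (hv : v < 0)
    (hw : w < 0) (ev : e₂ (x * (e₁ v / v)) = e₁ v) (ew : e₂ (x * (e₁ w / w)) = e₁ w) : v = w := by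
  wlog hvw : v ≤ w generalizing v w
  · exact (this hw hv ew ev (le_of_not_ge hvw)).symm
  have h3 := h₂.mono.monotoneOn (h₁.arg_neg hx hw) (h₁.arg_neg hx hv) (h₁.arg_anti hx hw hvw)
  rw [ev, ew] at h3
  by_contra hne
  have := h₁.mono hv hw (lt_of_le_of_ne hvw hne)
  linarith

/-- The iteration map on the negative half-line. -/
noncomputable def ff (e₁ e₂ : ℝ → ℝ) (x w : ℝ) : ℝ :=
  x * (e₂ (x * (e₁ w / w)) / (x * (e₁ w / w)))

lemma ff_neg (h₁ : RGood e₁) (h₂ : RGood e₂) {x w : ℝ} (hx : x < 0) (hw : w < 0) :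
    ff e₁ e₂ x w < 0 := h₂.arg_neg hx (h₁.arg_neg hx hw)

lemma ff_mono (h₁ : RGood e₁) (h₂ : RGood e₂) {x v w : ℝ} (hx : x < 0) (hw : w < 0)
    (hvw : v ≤ w) : ff e₁ e₂ x v ≤ ff e₁ e₂ x w :=
  h₂.arg_anti hx (h₁.arg_neg hx (lt_of_le_of_lt hvw hw)) (h₁.arg_anti hx hw hvw)

lemma ff_sub (h₁ : RGood e₁) {x w : ℝ} (hx : x < 0) (hw : w < 0) :
    (ff e₁ e₂ x w - w) * (e₁ w / w) = e₂ (x * (e₁ w / w)) - e₁ w := by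
  have hk := (h₁.kpos hw).ne'
  have h1 : w * (e₁ w / w) = e₁ w := mul_div_cancel₀ _ hw.ne
  unfold ff
  rw [sub_mul, h1]
  have hx' := hx.ne
  congr 1
  generalize e₁ w / w = k at *
  field_simp

lemma ff_fixed_iff (h₁ : RGood e₁) {x w : ℝ} (hx : x < 0) (hw : w < 0) :
    ff e₁ e₂ x w = w ↔ e₂ (x * (e₁ w / w)) = e₁ w := by
  have := ff_sub (e₂ := e₂) h₁ hx hw
  have hk := (h₁.kpos hw).ne'
  constructor
  · intro h
    rw [h] at this; linarith
  · intro h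
    rw [h, sub_self] at this
    rcases mul_eq_zero.1 this with h | h
    · linarith
    · exact absurd h hk

lemma ff_cont (h₁ : RGood e₁) (h₂ : RGood e₂) {x : ℝ} (hx : x < 0) :
    ContinuousOn (ff e₁ e₂ x) (Iio 0) := by
  refine continuousOn_const.mul ?_
  refine h₂.kcont.comp (continuousOn_const.mul h₁.kcont) ?_
  intro w hw
  exact h₁.arg_neg hx hw

lemma iter_tendsto (h₁ : RGood e₁) (h₂ : RGood e₂) {x : ℝ} (hx : x < 0) (u : ℕ → ℝ)
    (h0 : u 0 < 0) (hu : ∀ n, u (n+1) = ff e₁ e₂ x (u n)) :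
    ∃ L < 0, Tendsto u atTop (𝓝 L) ∧ ff e₁ e₂ x L = L := by
  obtain ⟨s, hs, hs2⟩ := exists_sol h₁ h₂ hx
  have hfs := (ff_fixed_iff h₁ hx hs).2 hs2
  have hneg : ∀ n, u n < 0 := by
    intro n
    induction n with
    | zero => exact h0
    | succ n ih => rw [hu]; exact ff_neg h₁ h₂ hx ih
  have up : ∀ w < 0, s ≤ w → ff e₁ e₂ x w ≤ w := by
    intro w hw hsw
    have := ff_sub (e₂ := e₂) h₁ hx hw
    have h3 := h₂.mono.monotoneOn (h₁.arg_neg hx hw) (h₁.arg_neg hx hs) (h₁.arg_anti hx hw hsw)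
    have h4 := h₁.mono.monotoneOn hs hw hsw
    by_contra hc
    push Not at hc
    have := mul_pos (sub_pos.2 hc) (h₁.kpos hw)
    linarith
  have dn : ∀ w < 0, w ≤ s → w ≤ ff e₁ e₂ x w := by
    intro w hw hsw
    have := ff_sub (e₂ := e₂) h₁ hx hw
    have h3 := h₂.mono.monotoneOn (h₁.arg_neg hx hs) (h₁.arg_neg hx hw) (h₁.arg_anti hx hs hsw)
    have h4 := h₁.mono.monotoneOn hw hs hsw
    by_contra hc
    push Not at hc
    have := mul_neg_of_neg_of_pos (sub_neg.2 hc) (h₁.kpos hw)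
    linarith
  have key : ∃ L < 0, Tendsto u atTop (𝓝 L) := by
    rcases le_total s (u 0) with h | h
    · have hb : ∀ n, s ≤ u n := by
        intro n
        induction n with
        | zero => exact h
        | succ n ih => rw [hu, ← hfs]; exact ff_mono h₁ h₂ hx (hneg n) ih
      have anti : Antitone u := antitone_nat_of_succ_le fun n => by
        rw [hu]; exact up _ (hneg n) (hb n)
      have ht := tendsto_atTop_ciInf anti ⟨s, by rintro _ ⟨n, rfl⟩; exact hb n⟩
      exact ⟨_, lt_of_le_of_lt (ciInf_le ⟨s, by rintro _ ⟨n, rfl⟩; exact hb n⟩ 0) h0, ht⟩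
    · have hb : ∀ n, u n ≤ s := by
        intro n
        induction n with
        | zero => exact h
        | succ n ih => rw [hu, ← hfs]; exact ff_mono h₁ h₂ hx hs ih
      have mono : Monotone u := monotone_nat_of_le_succ fun n => by
        rw [hu]; exact dn _ (hneg n) (hb n)
      have ht := tendsto_atTop_ciSup mono ⟨s, by rintro _ ⟨n, rfl⟩; exact hb n⟩
      exact ⟨_, lt_of_le_of_lt (ciSup_le hb) hs, ht⟩
  obtain ⟨L, hL, ht⟩ := key
  refine ⟨L, hL, ht, ?_⟩
  have c : ContinuousAt (ff e₁ e₂ x) L := (ff_cont h₁ h₂ hx).continuousAt (Iio_mem_nhds hL)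
  have t1 : Tendsto (fun n => u (n+1)) atTop (𝓝 (ff e₁ e₂ x L)) := by
    simp only [hu]
    exact c.tendsto.comp ht
  exact tendsto_nhds_unique t1 (ht.comp (tendsto_add_atTop_nat 1))

end RGood

/-! ### Normal families -/

noncomputable def srt (w : ℂ) : ℂ := exp (log (-w) / 2)
noncomputable def cay (w : ℂ) : ℂ := (1 - srt w) / (1 + srt w)
noncomputable def icay (v : ℂ) : ℂ := -((1 - v) / (1 + v)) ^ 2

lemma srt_re {w : ℂ} (hw : w ∈ SlitP) : 0 < (srt w).re := by
  have h := (mem_SlitP_iff w).1 hw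
  have h1 := Complex.mem_slitPlane_iff_arg.1 h
  have h2 := Complex.neg_pi_lt_arg (-w)
  have h3 := lt_of_le_of_ne (Complex.arg_le_pi (-w)) h1.1
  unfold srt
  rw [exp_re]
  refine mul_pos (Real.exp_pos _) (Real.cos_pos_of_mem_Ioo ⟨?_, ?_⟩)
  · have : (log (-w) / 2).im = (-w).arg / 2 := by simp [log_im]
    rw [this]; linarith
  · have : (log (-w) / 2).im = (-w).arg / 2 := by simp [log_im]
    rw [this]; linarith

lemma srt_sq {w : ℂ} (hw : w ∈ SlitP) : srt w ^ 2 = -w := by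
  unfold srt
  rw [← Complex.exp_nat_mul]
  have : ((2 : ℕ) : ℂ) * (log (-w) / 2) = log (-w) := by push_cast; ring
  rw [this, Complex.exp_log (neg_ne_zero.2 (SlitP_ne_zero hw))]

lemma one_add_ne {s : ℂ} (hs : 0 < s.re) : 1 + s ≠ 0 := by
  intro h
  have := congrArg Complex.re h
  simp at this; linarith

lemma one_add_ne' {v : ℂ} (hv : ‖v‖ < 1) : 1 + v ≠ 0 := by
  intro h
  have : v = -1 := by linear_combination h
  rw [this] at hv; simp at hv

lemma srt_diff : DifferentiableOn ℂ srt SlitP := by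
  intro w hw
  have h := (mem_SlitP_iff w).1 hw
  unfold srt
  refine DifferentiableAt.differentiableWithinAt ?_
  exact ((differentiableAt_id.neg.clog h).div_const 2).cexp

lemma cay_diff : DifferentiableOn ℂ cay SlitP := by
  unfold cay
  exact ((differentiableOn_const 1).sub srt_diff).div ((differentiableOn_const 1).add srt_diff)
    fun w hw => one_add_ne (srt_re hw)

lemma cay_norm {w : ℂ} (hw : w ∈ SlitP) : ‖cay w‖ < 1 := by
  have hs := srt_re hw
  unfold cay
  rw [norm_div, div_lt_one (norm_pos_iff.2 (one_add_ne hs))]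
  rw [← sq_lt_sq₀ (norm_nonneg _) (norm_nonneg _), ← normSq_eq_norm_sq, ← normSq_eq_norm_sq,
    normSq_apply, normSq_apply]
  simp; nlinarith

lemma icay_cay {w : ℂ} (hw : w ∈ SlitP) : icay (cay w) = w := by
  have hs := one_add_ne (srt_re hw)
  have h2 := srt_sq hw
  unfold icay cay
  have e : (1 - (1 - srt w) / (1 + srt w)) / (1 + (1 - srt w) / (1 + srt w)) = srt w := by
    have e1 : 1 - (1 - srt w) / (1 + srt w) = 2 * srt w / (1 + srt w) := by field_simp; ring
    have e2 : 1 + (1 - srt w) / (1 + srt w) = 2 / (1 + srt w) := by field_simp; ring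
    rw [e1, e2]; field_simp
  rw [e, h2, neg_neg]

lemma icay_mem {v : ℂ} (hv : ‖v‖ < 1) : icay v ∈ SlitP := by
  have h1 := one_add_ne' hv
  have hre : 0 < ((1 - v) / (1 + v)).re := by
    rw [div_re, ← add_div]
    refine div_pos ?_ (normSq_pos.2 h1)
    have h2 : normSq v < 1 := by
      rw [normSq_eq_norm_sq]; nlinarith [norm_nonneg v]
    rw [normSq_apply] at h2
    simp; nlinarith
  unfold icay
  generalize (1 - v) / (1 + v) = s at *
  by_cases h : s.im = 0
  · left
    simp [pow_two, h]; nlinarith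
  · right
    have : (-s ^ 2).im = -(2 * (s.re * s.im)) := by simp [pow_two]; ring
    rw [this]
    exact neg_ne_zero.2 (mul_ne_zero two_ne_zero (mul_ne_zero hre.ne' h))

lemma icay_diffAt {v : ℂ} (hv : ‖v‖ < 1) : DifferentiableAt ℂ icay v := by
  have h1 := one_add_ne' hv
  unfold icay
  exact ((((differentiableAt_const 1).sub differentiableAt_id).div
    ((differentiableAt_const 1).add differentiableAt_id) h1).pow 2).neg

/-- A pointwise limit of uniformly bounded holomorphic functions is holomorphic. -/
lemma limit_holo {U : Set ℂ} (hU : IsOpen U) {l : Filter ℕ} [l.NeBot] {F : ℕ → ℂ → ℂ} {G : ℂ → ℂ}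
    (hF : ∀ n, DifferentiableOn ℂ (F n) U) (hb : ∀ n, ∀ z ∈ U, ‖F n z‖ ≤ 1)
    (hl : ∀ z ∈ U, Tendsto (fun n => F n z) l (𝓝 (G z))) : DifferentiableOn ℂ G U := by
  refine TendstoLocallyUniformlyOn.differentiableOn (F := F) (φ := l) ?_
    (Eventually.of_forall hF) hU
  rw [Metric.tendstoLocallyUniformlyOn_iff]
  intro ε hε z hz
  obtain ⟨r, hr, hrU⟩ := Metric.isOpen_iff.1 hU z hz
  have lip : ∀ n, ∀ w ∈ Metric.ball z r, dist (F n w) (F n z) ≤ 2 / r * dist w z := by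
    intro n w hw
    refine Complex.dist_le_div_mul_dist_of_mapsTo_ball ((hF n).mono hrU) ?_ hw
    intro y hy
    rw [Metric.mem_closedBall]
    have := hb n y (hrU hy)
    have := hb n z hz
    calc dist (F n y) (F n z) ≤ ‖F n y‖ + ‖F n z‖ := by rw [dist_eq_norm]; exact norm_sub_le _ _
      _ ≤ 2 := by linarith
  have lipG : ∀ w ∈ Metric.ball z r, dist (G w) (G z) ≤ 2 / r * dist w z := by
    intro w hw
    exact le_of_tendsto ((hl w (hrU hw)).dist (hl z hz)) (Eventually.of_forall fun n => lip n w hw)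
  set δ := min r (ε * r / 6) with hδ
  have hδ0 : 0 < δ := by positivity
  refine ⟨Metric.ball z δ, mem_nhdsWithin_of_mem_nhds (Metric.ball_mem_nhds z hδ0), ?_⟩
  have ev : ∀ᶠ n in l, dist (F n z) (G z) < ε / 3 :=
    (Metric.tendsto_nhds.1 (hl z hz)) _ (by positivity)
  filter_upwards [ev] with n hn w hw
  have hw : dist w z < δ := hw
  have hwr : w ∈ Metric.ball z r := lt_of_lt_of_le hw (min_le_left _ _)
  have h1 := lip n w hwr
  have h2 := lipG w hwr
  have h3 : 2 / r * dist w z ≤ ε / 3 := by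
    have : dist w z ≤ ε * r / 6 := hw.le.trans (min_le_right _ _)
    calc 2 / r * dist w z ≤ 2 / r * (ε * r / 6) := by gcongr
      _ = ε / 3 := by field_simp; norm_num
  have t1 := dist_triangle (G w) (G z) (F n w)
  have t2 := dist_triangle (G z) (F n z) (F n w)
  rw [dist_comm (G z) (F n z), dist_comm (F n z) (F n w)] at t2
  linarith

lemma normal_limit {W : ℕ → ℂ → ℂ} (hd : ∀ n, DifferentiableOn ℂ (W n) SlitP)
    (hm : ∀ n, MapsTo (W n) SlitP SlitP) {x₀ L : ℂ} (hx₀ : x₀ ∈ SlitP) (hL : L ∈ SlitP)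
    (ht : Tendsto (fun n => W n x₀) atTop (𝓝 L)) :
    ∃ (l : Filter ℕ) (ω : ℂ → ℂ), l.NeBot ∧ l ≤ atTop ∧ DifferentiableOn ℂ ω SlitP ∧
      MapsTo ω SlitP SlitP ∧ ∀ z ∈ SlitP, Tendsto (fun n => W n z) l (𝓝 (ω z)) := by
  set l : Ultrafilter ℕ := hyperfilter ℕ with hl
  have hle : (l : Filter ℕ) ≤ atTop := Nat.hyperfilter_le_atTop
  have hb : ∀ n, ∀ z ∈ SlitP, ‖cay (W n z)‖ ≤ 1 := fun n z hz => (cay_norm (hm n hz)).le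
  have hex : ∀ z, ∃ g : ℂ, z ∈ SlitP →
      (‖g‖ ≤ 1 ∧ Tendsto (fun n => cay (W n z)) l (𝓝 g)) := by
    intro z
    by_cases hz : z ∈ SlitP
    · have hc : IsCompact (Metric.closedBall (0:ℂ) 1) := isCompact_closedBall 0 1
      have := hc.ultrafilter_le_nhds (l.map (fun n => cay (W n z))) ?_
      · obtain ⟨g, hg, hg2⟩ := this
        exact ⟨g, fun _ => ⟨by simpa using hg, hg2⟩⟩
      · rw [le_principal_iff]
        change _ ∈ Filter.map _ _
        rw [Filter.mem_map]
        exact Filter.Eventually.of_forall (p := fun n => cay (W n z) ∈ Metric.closedBall (0:ℂ) 1)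
          fun n => by simpa using hb n z hz
    · exact ⟨0, fun h => absurd h hz⟩
  choose G hG using hex
  have hGd : DifferentiableOn ℂ G SlitP := by
    refine limit_holo SlitP_isOpen (l := (l : Filter ℕ)) (F := fun n z => cay (W n z)) ?_ hb
      (fun z hz => (hG z hz).2)
    intro n
    exact cay_diff.comp (hd n) (hm n)
  have hGx : G x₀ = cay L := by
    refine tendsto_nhds_unique (hG x₀ hx₀).2 ?_
    have c : ContinuousAt cay L :=
      (cay_diff.differentiableAt (SlitP_isOpen.mem_nhds hL)).continuousAt
    exact c.tendsto.comp (ht.mono_left hle)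
  have hG1 : ∀ z ∈ SlitP, ‖G z‖ < 1 := by
    intro z hz
    by_contra hc
    push Not at hc
    have h1 : ‖G z‖ = 1 := le_antisymm (hG z hz).1 hc
    have := Complex.norm_eqOn_of_isPreconnected_of_isMaxOn SlitP_preconn SlitP_isOpen hGd hz
      (fun y hy => by
        change ‖G y‖ ≤ ‖G z‖
        rw [h1]; exact (hG y hy).1) hx₀
    simp only [Function.comp, Function.const] at this
    rw [h1, hGx] at this
    exact (cay_norm hL).ne this
  refine ⟨l, fun z => icay (G z), inferInstance, hle, ?_, fun z hz => icay_mem (hG1 z hz), ?_⟩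
  · intro z hz
    exact DifferentiableAt.comp_differentiableWithinAt (g := icay) z (icay_diffAt (hG1 z hz)) (hGd z hz)
  · intro z hz
    have h1 := ((icay_diffAt (hG1 z hz)).continuousAt.tendsto).comp (hG z hz).2
    refine h1.congr fun n => ?_
    exact icay_cay (hm n hz)

/-! ### Putting things together -/

namespace Good
variable {η η₁ η₂ : ℂ → ℂ}

lemma ofReal_eq (hη : Good η) {x : ℝ} (hx : x < 0) : η x = ((η x).re : ℂ) := by
  apply Complex.ext <;> simp [(hη.real hx).1]

lemma rgood (hη : Good η) : RGood (fun x : ℝ => (η x).re) := by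
  have hmono : MonotoneOn (fun x : ℝ => (η x).re) (Iio 0) :=
    mono_of_pick hη.hd (fun x hx => (hη.real hx).1) hη.him
  refine ⟨fun x hx => (hη.real hx).2, ?_, ?_, ?_, ?_⟩
  · intro a ha b hb hab
    refine lt_of_le_of_ne (hmono ha hb hab.le) ?_
    intro heq
    have heq : (η a).re = (η b).re := heq
    have hE : EqOn η (fun _ => η a) SlitP := by
      refine eqOn_SlitP hη.hd (differentiableOn_const _) hab (le_of_lt hb) ?_
      intro x hx1 hx2
      have hx0 : x < 0 := lt_trans hx2 hb
      have h1 : (η a).re ≤ (η x).re := hmono ha hx0 hx1.le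
      have h2 : (η x).re ≤ (η b).re := hmono hx0 hb hx2.le
      rw [hη.ofReal_eq hx0, hη.ofReal_eq ha]
      have : (η x).re = (η a).re := by linarith
      rw [this]
    have h3 : η I = η a := hE (show I ∈ SlitP from Or.inr (by simp))
    have h4 := hη.him I (by simp)
    rw [h3, (hη.real ha).1] at h4
    exact lt_irrefl _ h4
  · have := mono_of_pick (F := fun w => η w / w)
      (hη.hd.div differentiableOn_id fun z hz => SlitP_ne_zero hz)
      (fun x hx => by rw [(hη.h_real hx).1]; simp) hη.hh
    intro a ha b hb hab
    have h1 := this ha hb hab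
    simp only at h1
    rw [(hη.h_real ha).1, (hη.h_real hb).1, ofReal_re, ofReal_re] at h1
    exact h1
  · refine Complex.continuous_re.comp_continuousOn ?_
    exact hη.hd.continuousOn.comp Complex.continuous_ofReal.continuousOn
      fun x hx => ofReal_mem_SlitP hx
  · have := (Complex.continuous_re.tendsto 0).comp hη.hlim
    rw [Complex.zero_re] at this
    exact this

lemma TT_real (hη : Good η) (x : ℝ) {w : ℝ} (hw : w < 0) :
    TT η x w = ((x * ((η w).re / w) : ℝ) : ℂ) := by
  rw [TT, (hη.h_real hw).1]; push_cast; rfl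

lemma TT_diff (hη : Good η) {f : ℂ → ℂ} (hf : DifferentiableOn ℂ f SlitP)
    (hm : MapsTo f SlitP SlitP) : DifferentiableOn ℂ (fun z => TT η z (f z)) SlitP := by
  unfold TT
  exact differentiableOn_id.mul ((hη.hd.comp hf hm).div hf fun z hz => SlitP_ne_zero (hm hz))

/-- Solutions of the equation on the negative half-line are negative. -/
lemma sol_real (h₁ : Good η₁) (h₂ : Good η₂) {x : ℝ} (hx : x < 0) {w : ℂ} (hw : w ∈ SlitP)
    (heq : w = w * η₂ (x * η₁ w / w) / η₁ w) :
    w.re < 0 ∧ w = (w.re : ℂ) ∧ (η₂ ((x * ((η₁ (w.re : ℂ)).re / w.re) : ℝ) : ℂ)).re =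
      (η₁ (w.re : ℂ)).re := by
  have hw0 := SlitP_ne_zero hw
  have hη0 := SlitP_ne_zero (h₁.hm hw)
  have e1 : η₂ (x * (η₁ w / w)) = η₁ w := by
    rw [← mul_div_assoc]
    rw [eq_div_iff hη0] at heq
    exact (mul_left_cancel₀ hw0 heq).symm
  have him : (x * (η₁ w / w) : ℂ).im = x * (η₁ w / w).im := by simp [mul_im]
  rcases lt_trichotomy w.im 0 with h | h | h
  · exfalso
    have a1 := h₁.im_ne h
    have a2 := h₁.hh ((starRingEnd ℂ) w) (by simpa using h)
    rw [h₁.hconj w hw, ← map_div₀, conj_im] at a2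
    have a3 := h₂.him (x * (η₁ w / w)) (by rw [him]; nlinarith)
    rw [e1] at a3
    linarith
  · have hr : w.re < 0 := by
      rcases hw with h' | h'
      · exact h'
      · exact absurd h h'
    have hwe : w = (w.re : ℂ) := by apply Complex.ext <;> simp [h]
    refine ⟨hr, hwe, ?_⟩
    rw [hwe, (h₁.h_real hr).1] at e1
    push_cast at e1 ⊢
    rw [e1]
  · exfalso
    have a1 := h₁.him w h
    have a2 := h₁.hh w h
    have a3 := h₂.im_ne (w := x * (η₁ w / w)) (by rw [him]; nlinarith)
    rw [e1] at a3
    linarith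

/-- The iterates. -/
noncomputable def WW (η₁ η₂ : ℂ → ℂ) : ℕ → ℂ → ℂ
  | 0 => fun z => z
  | n + 1 => fun z => TT η₂ z (TT η₁ z (WW η₁ η₂ n z))

lemma WW_inv (h₁ : Good η₁) (h₂ : Good η₂) (n : ℕ) {z : ℂ} (hz : z ∈ SlitP) :
    SInv z (WW η₁ η₂ n z) := by
  induction n with
  | zero => exact SInv.self hz
  | succ n ih => exact h₂.TT_inv hz (h₁.TT_inv hz ih)

lemma WW_diff (h₁ : Good η₁) (h₂ : Good η₂) (n : ℕ) : DifferentiableOn ℂ (WW η₁ η₂ n) SlitP := by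
  induction n with
  | zero => exact differentiableOn_id
  | succ n ih =>
    exact h₂.TT_diff (h₁.TT_diff ih fun z hz => (WW_inv h₁ h₂ n hz).1)
      fun z hz => (h₁.TT_inv hz (WW_inv h₁ h₂ n hz)).1

lemma TT2_real (h₁ : Good η₁) (h₂ : Good η₂) {x w : ℝ} (hx : x < 0) (hw : w < 0) :
    TT η₂ x (TT η₁ x w) =
      ((RGood.ff (fun x : ℝ => (η₁ x).re) (fun x : ℝ => (η₂ x).re) x w : ℝ) : ℂ) := by
  rw [h₁.TT_real x hw, h₂.TT_real x (h₁.rgood.arg_neg hx hw)]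
  rfl

lemma WW_real (h₁ : Good η₁) (h₂ : Good η₂) {x : ℝ} (hx : x < 0) :
    ∃ L < 0, Tendsto (fun n => WW η₁ η₂ n x) atTop (𝓝 ((L : ℝ) : ℂ)) ∧
      TT η₂ x (TT η₁ x ((L : ℝ) : ℂ)) = ((L : ℝ) : ℂ) := by
  set f := RGood.ff (fun x : ℝ => (η₁ x).re) (fun x : ℝ => (η₂ x).re) x with hf
  set u : ℕ → ℝ := fun n => f^[n] x with hu
  have hus : ∀ n, u (n+1) = f (u n) := fun n => Function.iterate_succ_apply' f n x
  obtain ⟨L, hL, ht, hfix⟩ := RGood.iter_tendsto h₁.rgood h₂.rgood hx u hx hus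
  have hWu : ∀ n, WW η₁ η₂ n x = ((u n : ℝ) : ℂ) ∧ u n < 0 := by
    intro n
    induction n with
    | zero => exact ⟨rfl, hx⟩
    | succ n ih =>
      refine ⟨?_, ?_⟩
      · simp only [WW]
        rw [ih.1, TT2_real h₁ h₂ hx ih.2, hus]
      · rw [hus]; exact RGood.ff_neg h₁.rgood h₂.rgood hx ih.2
  refine ⟨L, hL, ?_, ?_⟩
  · simp only [fun n => (hWu n).1]
    exact (Complex.continuous_ofReal.tendsto L).comp ht
  · rw [TT2_real h₁ h₂ hx hL, hfix]

theorem main (h₁ : Good η₁) (h₂ : Good η₂) :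
    ∃ ω : ℂ → ℂ,
      DifferentiableOn ℂ ω SlitP ∧ Set.MapsTo ω SlitP SlitP ∧
      (∀ z ∈ SlitP, ω z = ω z * η₂ (z * η₁ (ω z) / ω z) / η₁ (ω z)) ∧
      (∀ z : ℂ, 0 < z.im → z.arg < (ω z).arg ∧ (ω z).arg < Real.pi) := by
  have m1 : (-1 : ℝ) < 0 := by norm_num
  obtain ⟨L₀, hL₀, ht₀, -⟩ := WW_real h₁ h₂ m1
  obtain ⟨l, ω, hne, hle, hωd, hωm, hωt⟩ := normal_limit (WW_diff h₁ h₂)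
    (fun n z hz => (WW_inv h₁ h₂ n hz).1) (ofReal_mem_SlitP m1) (ofReal_mem_SlitP hL₀) ht₀
  -- invariance passes to the limit
  have hinv : ∀ z ∈ SlitP, SInv z (ω z) := by
    intro z hz
    have t := hωt z hz
    have tre := (Complex.continuous_re.tendsto _).comp t
    have tim := (Complex.continuous_im.tendsto _).comp t
    have tcr := (tim.mul_const z.re).sub (tre.mul_const z.im)
    refine ⟨hωm hz, fun h => ⟨?_, ?_⟩, fun h => ⟨?_, ?_⟩, fun h => ?_⟩
    · exact ge_of_tendsto tim (Eventually.of_forall fun n => ((WW_inv h₁ h₂ n hz).2.1 h).1)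
    · exact ge_of_tendsto tcr (Eventually.of_forall fun n => ((WW_inv h₁ h₂ n hz).2.1 h).2)
    · exact le_of_tendsto tim (Eventually.of_forall fun n => ((WW_inv h₁ h₂ n hz).2.2.1 h).1)
    · exact le_of_tendsto tcr (Eventually.of_forall fun n => ((WW_inv h₁ h₂ n hz).2.2.1 h).2)
    · refine tendsto_nhds_unique tim ?_
      refine tendsto_const_nhds.congr fun n => ?_
      exact ((WW_inv h₁ h₂ n hz).2.2.2 h).symm
  have hinv1 : ∀ z ∈ SlitP, SInv z (TT η₁ z (ω z)) := fun z hz => h₁.TT_inv hz (hinv z hz)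
  have hfix : EqOn (fun z => TT η₂ z (TT η₁ z (ω z))) ω SlitP := by
    refine eqOn_SlitP (h₂.TT_diff (h₁.TT_diff hωd hωm) fun z hz => (hinv1 z hz).1) hωd
      m1 le_rfl ?_
    intro x _ hx
    obtain ⟨L, hL, ht, hf⟩ := WW_real h₁ h₂ hx
    have : ω x = (L : ℂ) := tendsto_nhds_unique (hωt x (ofReal_mem_SlitP hx)) (ht.mono_left hle)
    simp only [this, hf]
  refine ⟨ω, hωd, hωm, ?_, ?_⟩
  · intro z hz
    have hf : TT η₂ z (TT η₁ z (ω z)) = ω z := hfix hz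
    have hz0 := SlitP_ne_zero hz
    have hw0 := SlitP_ne_zero (hωm hz)
    have he0 := SlitP_ne_zero (h₁.hm (hωm hz))
    have e : z * η₁ (ω z) / ω z = TT η₁ z (ω z) := by rw [TT, mul_div_assoc]
    rw [e]
    nth_rewrite 1 [← hf]
    have e2 : ∀ a, TT η₂ z a = z * (η₂ a / a) := fun a => rfl
    rw [e2]
    generalize hA : η₂ (TT η₁ z (ω z)) = A
    rw [TT]
    field_simp
  · intro z hz
    have hzS : z ∈ SlitP := Or.inr hz.ne'
    have hf : TT η₂ z (TT η₁ z (ω z)) = ω z := hfix hzS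
    have a := h₁.TT_upper hz (hinv z hzS)
    have b := h₂.TT_upper hz (hinv1 z hzS)
    rw [arg_lt_iff hz, ← hf]
    exact ⟨b.1, b.2.2 a.1⟩

end Good

/-- Given analytic `η₁, η₂ : ℂ ∖ [0,∞) → ℂ ∖ [0,∞)` with `η_j(0−) = 0`,
`π > arg η_j(z) > arg z` on `ℂ⁺`, and `η_j(conj z) = conj(η_j(z))`, there exists
a unique analytic `ω : ℂ ∖ [0,∞) → ℂ ∖ [0,∞)` such that
`ω(z) = ω(z)·η₂(z·η₁(ω(z))/ω(z))/η₁(ω(z))` for all `z ∈ ℂ ∖ [0,∞)`; moreover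
`arg z < arg ω(z) < π` for all `z ∈ ℂ⁺`. -/
theorem subordination_with_omega
    (η₁ η₂ : ℂ → ℂ)
    (hd₁ : DifferentiableOn ℂ η₁ SlitP) (hm₁ : Set.MapsTo η₁ SlitP SlitP)
    (hd₂ : DifferentiableOn ℂ η₂ SlitP) (hm₂ : Set.MapsTo η₂ SlitP SlitP)
    (hlim₁ : Tendsto (fun x : ℝ => η₁ (Complex.ofReal x)) (𝓝[<] (0:ℝ)) (𝓝 0))
    (hlim₂ : Tendsto (fun x : ℝ => η₂ (Complex.ofReal x)) (𝓝[<] (0:ℝ)) (𝓝 0))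
    (harg₁ : ∀ z : ℂ, 0 < z.im → z.arg < (η₁ z).arg ∧ (η₁ z).arg < Real.pi)
    (harg₂ : ∀ z : ℂ, 0 < z.im → z.arg < (η₂ z).arg ∧ (η₂ z).arg < Real.pi)
    (hconj₁ : ∀ z ∈ SlitP, η₁ ((starRingEnd ℂ) z) = (starRingEnd ℂ) (η₁ z))
    (hconj₂ : ∀ z ∈ SlitP, η₂ ((starRingEnd ℂ) z) = (starRingEnd ℂ) (η₂ z)) :
    ∃ ω : ℂ → ℂ,
      DifferentiableOn ℂ ω SlitP ∧ Set.MapsTo ω SlitP SlitP ∧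
      (∀ z ∈ SlitP, ω z = ω z * η₂ (z * η₁ (ω z) / ω z) / η₁ (ω z)) ∧
      (∀ z : ℂ, 0 < z.im → z.arg < (ω z).arg ∧ (ω z).arg < Real.pi) ∧
      (∀ ω' : ℂ → ℂ, DifferentiableOn ℂ ω' SlitP → Set.MapsTo ω' SlitP SlitP →
        (∀ z ∈ SlitP, ω' z = ω' z * η₂ (z * η₁ (ω' z) / ω' z) / η₁ (ω' z)) →
        Set.EqOn ω ω' SlitP) := by
  have h₁ : Good η₁ := Good.mk' hd₁ hm₁ hlim₁ harg₁ hconj₁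
  have h₂ : Good η₂ := Good.mk' hd₂ hm₂ hlim₂ harg₂ hconj₂
  obtain ⟨ω, a, b, c, d⟩ := Good.main h₁ h₂
  refine ⟨ω, a, b, c, d, ?_⟩
  intro ω' a' b' c'
  refine eqOn_SlitP a a' (show (-1 : ℝ) < 0 by norm_num) le_rfl ?_
  intro x _ hx
  have hxS := ofReal_mem_SlitP hx
  obtain ⟨p1, p2, p3⟩ := Good.sol_real h₁ h₂ hx (b hxS) (c x hxS)
  obtain ⟨q1, q2, q3⟩ := Good.sol_real h₁ h₂ hx (b' hxS) (c' x hxS)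
  rw [p2, q2, RGood.unique_sol h₁.rgood h₂.rgood hx p1 q1 p3 q3]
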